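/- arXiv:2308.11420 — 9 statements merged into one kernel-verified Lean document; each statement's English description precedes it below -/
import Mathlib

section
/- Let K > 0 and let c : ℝ → ℝ be convex, strictly increasing and differentiable on [0, ∞) with c(0) ≥ 0. Define the modified cost ĉ(s) = (1 + s/K)·c(s) − (1/K)·∫₀^s c(x) dx. Then for every s ≥ 0 one has c(s) ≤ ĉ(s) ≤ (1 + s/K)·c(s). -/
/-- The sandwich inequality relating a generator's true cost `c` to its modified cost
`ĉ(s) = (1 + s/K)·c(s) − (1/K)·∫₀^s c(x) dx`: for every `s ≥ 0`,
`c(s) ≤ ĉ(s) ≤ (1 + s/K)·c(s)`. -/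
theorem modified_cost_sandwich
    (K : ℝ) (hK : 0 < K) (c : ℝ → ℝ)
    (hconv : ConvexOn ℝ (Set.Ici (0 : ℝ)) c)
    (hmono : StrictMonoOn c (Set.Ici (0 : ℝ)))
    (hdiff : DifferentiableOn ℝ c (Set.Ici (0 : ℝ)))
    (hc0 : 0 ≤ c 0)
    (chat : ℝ → ℝ)
    (hchat : ∀ s, chat s = (1 + s / K) * c s - (1 / K) * ∫ x in (0:ℝ)..s, c x) :
    ∀ s, 0 ≤ s → c s ≤ chat s ∧ chat s ≤ (1 + s / K) * c s := by
  intro s hs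
  have hsub : Set.uIcc 0 s ⊆ Set.Ici (0 : ℝ) := by
    rw [Set.uIcc_of_le hs]
    exact fun x hx => hx.1
  have hint : IntervalIntegrable c MeasureTheory.volume 0 s :=
    (hdiff.continuousOn.mono hsub).intervalIntegrable
  have h0 : 0 ≤ ∫ x in (0:ℝ)..s, c x := by
    apply intervalIntegral.integral_nonneg hs
    intro x hx
    exact hc0.trans (hmono.monotoneOn Set.self_mem_Ici hx.1 hx.1)
  have h1 : (∫ x in (0:ℝ)..s, c x) ≤ s * c s := by
    have h := intervalIntegral.integral_mono_on hs hint
      (intervalIntegrable_const (c := c s))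
      (fun x hx => hmono.monotoneOn (Set.mem_Ici.2 hx.1) (Set.mem_Ici.2 hs) hx.2)
    simpa using h
  have hK' : 0 ≤ 1 / K := by positivity
  have e : (1 + s / K) * c s = c s + 1 / K * (s * c s) := by ring
  have h2 := mul_le_mul_of_nonneg_left h1 hK'
  have h3 := mul_nonneg hK' h0
  rw [hchat s]
  constructor <;> linarith
end

section
/- Let K > 0 and let c : ℝ → ℝ be convex, strictly increasing and differentiable on [0, ∞). Define ĉ(s) = (1 + s/K)·c(s) − (1/K)·∫₀^s c(x) dx. Then ĉ is strictly convex and strictly increasing on [0, ∞). -/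
theorem modified_cost_strictConvex_strictMono
    (K : ℝ) (hK : 0 < K) (c : ℝ → ℝ)
    (hconv : ConvexOn ℝ (Set.Ici (0 : ℝ)) c)
    (hmono : StrictMonoOn c (Set.Ici (0 : ℝ)))
    (hdiff : DifferentiableOn ℝ c (Set.Ici (0 : ℝ)))
    (chat : ℝ → ℝ)
    (hchat : ∀ s, chat s = (1 + s / K) * c s - (1 / K) * ∫ x in (0:ℝ)..s, c x) :
    StrictConvexOn ℝ (Set.Ici (0 : ℝ)) chat ∧ StrictMonoOn chat (Set.Ici (0 : ℝ)) := by
  have hg : Continuous (fun x => c (max x 0)) :=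
    hdiff.continuousOn.comp_continuous (by fun_prop) (fun x => le_max_right x 0)
  have heq : ∀ s ∈ Set.Ici (0:ℝ), chat s =
      (1 + s / K) * c s - (1 / K) * ∫ x in (0:ℝ)..s, c (max x 0) := by
    intro s hs
    rw [hchat]
    congr 2
    apply intervalIntegral.integral_congr
    intro x hx
    rw [Set.uIcc_of_le hs] at hx
    simp only [max_eq_left hx.1]
  have hI : ∀ s, HasDerivAt (fun s => ∫ x in (0:ℝ)..s, c (max x 0)) (c (max s 0)) s :=
    fun s => (hg.integral_hasStrictDerivAt 0 s).hasDerivAt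
  have hIc : Continuous (fun s => ∫ x in (0:ℝ)..s, c (max x 0)) :=
    continuous_iff_continuousAt.2 fun s => (hI s).continuousAt
  have hcont : ContinuousOn chat (Set.Ici (0:ℝ)) := by
    refine ContinuousOn.congr ?_ heq
    have := hdiff.continuousOn
    fun_prop
  have hcd : ∀ s, 0 < s → DifferentiableAt ℝ c s := fun s hs =>
    (hdiff s hs.le).differentiableAt (Ici_mem_nhds hs)
  have hder : ∀ s, 0 < s → deriv chat s = (1 + s / K) * deriv c s := by
    intro s hs
    have h1 := ((((hasDerivAt_id s).div_const K).const_add 1).mul (hcd s hs).hasDerivAt).sub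
      ((hI s).const_mul (1 / K))
    have h2 : HasDerivAt chat _ s := h1.congr_of_eventuallyEq (by
      filter_upwards [Ici_mem_nhds hs] with x hx
      rw [heq x hx]; rfl)
    rw [h2.deriv, max_eq_left hs.le]
    simp only [id]
    ring
  have hpos : ∀ s, 0 < s → 0 < deriv c s := by
    intro s hs
    have h0 : (0:ℝ) ∈ Set.Ici (0:ℝ) := Set.self_mem_Ici
    have h1 := hconv.slope_le_deriv h0 (Set.mem_Ici.2 hs.le) hs (hcd s hs)
    refine lt_of_lt_of_le ?_ h1
    rw [slope_def_field]
    exact div_pos (sub_pos.2 (hmono h0 hs.le hs)) (by linarith)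
  have hm : MonotoneOn (deriv c) (Set.Ioi (0:ℝ)) :=
    (hconv.subset Set.Ioi_subset_Ici_self (convex_Ioi 0)).monotoneOn_deriv
      (fun s hs => hcd s hs)
  constructor
  · refine StrictMonoOn.strictConvexOn_of_deriv (convex_Ici 0) hcont ?_
    rw [interior_Ici]
    intro x hx y hy hxy
    rw [hder x hx, hder y hy]
    have hx' : 0 < x := hx
    have h1 := hm hx hy hxy.le
    have h2 : x / K < y / K := by gcongr
    have h3 : 0 < x / K := by positivity
    exact mul_lt_mul (by linarith) h1 (hpos x hx) (by linarith)
  · refine strictMonoOn_of_deriv_pos (convex_Ici 0) hcont ?_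
    rw [interior_Ici]
    intro x hx
    have hx' : 0 < x := hx
    rw [hder x hx]
    have := hpos x hx
    positivity
end

section
/- Let N ≥ 1, K > 0, and for each n = 1,…,N let c_n : ℝ → ℝ be convex, strictly increasing and differentiable on [0, ∞), and let ĉ_n(s) = (1 + s/K)·c_n(s) − (1/K)·∫₀^s c_n(x) dx. Let F ⊆ [0, ∞)^N be a convex set. If s and s′ both minimize the total modified cost ∑_{n=1}^N ĉ_n(s_n) over F, then s = s′. -/
lemma chat_strictConvex (K : ℝ) (hK : 0 < K) (c : ℝ → ℝ)
    (hconv : ConvexOn ℝ (Set.Ici (0 : ℝ)) c)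
    (hmono : StrictMonoOn c (Set.Ici (0 : ℝ)))
    (hdiff : DifferentiableOn ℝ c (Set.Ici (0 : ℝ)))
    (chat : ℝ → ℝ)
    (hchat : ∀ s, chat s = (1 + s / K) * c s - (1 / K) * ∫ x in (0:ℝ)..s, c x) :
    StrictConvexOn ℝ (Set.Ici (0 : ℝ)) chat := by
  have hg : Continuous (fun x => c (max 0 x)) :=
    hdiff.continuousOn.comp_continuous (by fun_prop) (fun x => le_max_left 0 x)
  have hG : ∀ s, HasDerivAt (fun s => ∫ x in (0:ℝ)..s, c (max 0 x)) (c (max 0 s)) s :=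
    fun s => hg.integral_hasStrictDerivAt 0 s |>.hasDerivAt
  have heq : ∀ s ∈ Set.Ici (0:ℝ),
      chat s = (1 + s / K) * c s - (1 / K) * ∫ x in (0:ℝ)..s, c (max 0 x) := by
    intro s hs
    rw [hchat]
    congr 2
    apply intervalIntegral.integral_congr
    intro x hx
    rw [Set.uIcc_of_le hs] at hx
    simp [max_eq_right hx.1]
  have hcd : ∀ s, 0 < s → HasDerivAt c (deriv c s) s := fun s hs =>
    (hdiff.differentiableAt (Ici_mem_nhds hs)).hasDerivAt
  have hd : ∀ s, 0 < s → HasDerivAt chat ((1 + s / K) * deriv c s) s := by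
    intro s hs
    have h1 : HasDerivAt (fun s : ℝ => 1 + s / K) (1 / K) s :=
      ((hasDerivAt_id s).div_const K).const_add 1
    have h2 := (h1.mul (hcd s hs)).sub ((hG s).const_mul (1 / K))
    rw [max_eq_right hs.le] at h2
    have h3 := h2.congr_of_eventuallyEq (f₁ := chat) (by
      filter_upwards [Ici_mem_nhds hs] with x hx
      exact heq x hx)
    have e : (1 + s / K) * deriv c s
        = 1 / K * c s + (1 + s / K) * deriv c s - 1 / K * c s := by ring
    rw [e]
    exact h3
  have hpos : ∀ s, 0 < s → 0 < deriv c s := by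
    intro s hs
    have h := hconv.slope_le_of_hasDerivAt (Set.mem_Ici.2 le_rfl) (Set.mem_Ici.2 hs.le) hs (hcd s hs)
    have h' := hmono (Set.mem_Ici.2 le_rfl) (Set.mem_Ici.2 hs.le) hs
    refine lt_of_lt_of_le ?_ h
    rw [slope_def_field]
    exact div_pos (by linarith) (by linarith)
  have hmd : MonotoneOn (deriv c) (Set.Ioi 0) :=
    (hconv.subset Set.Ioi_subset_Ici_self (convex_Ioi 0)).monotoneOn_deriv
      (fun s hs => (hcd s hs).differentiableAt)
  apply StrictMonoOn.strictConvexOn_of_deriv (convex_Ici 0)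
  · refine ContinuousOn.congr ?_ heq
    have hGc : Continuous (fun s => ∫ x in (0:ℝ)..s, c (max 0 x)) :=
      continuous_iff_continuousAt.2 fun s => (hG s).continuousAt
    have := hdiff.continuousOn
    exact ((by fun_prop : Continuous fun s : ℝ => 1 + s / K).continuousOn.mul this).sub
      (hGc.const_mul _).continuousOn
  · rw [interior_Ici]
    intro x hx y hy hxy
    rw [(hd x hx).deriv, (hd y hy).deriv]
    have hx0 : 0 < x := hx
    have h1 : x / K < y / K := div_lt_div_of_pos_right hxy hK
    have h2 : 0 < x / K := div_pos hx0 hK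
    exact mul_lt_mul (by linarith) (hmd hx hy hxy.le) (hpos x hx) (by linarith)

/-- Uniqueness of the minimizer of the total modified cost over a convex feasible set
`F ⊆ [0, ∞)^N`: if `s` and `s'` both minimize `∑ n, ĉ n (s n)` over `F`, then `s = s'`. -/
theorem modified_cost_min_unique
    (N : ℕ) (hN : 1 ≤ N) (K : ℝ) (hK : 0 < K)
    (c : Fin N → ℝ → ℝ)
    (hconv : ∀ n, ConvexOn ℝ (Set.Ici (0 : ℝ)) (c n))
    (hmono : ∀ n, StrictMonoOn (c n) (Set.Ici (0 : ℝ)))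
    (hdiff : ∀ n, DifferentiableOn ℝ (c n) (Set.Ici (0 : ℝ)))
    (chat : Fin N → ℝ → ℝ)
    (hchat : ∀ n s, chat n s = (1 + s / K) * c n s - (1 / K) * ∫ x in (0:ℝ)..s, c n x)
    (F : Set (Fin N → ℝ))
    (hFconv : Convex ℝ F)
    (hFpos : ∀ s ∈ F, ∀ n, 0 ≤ s n)
    (s s' : Fin N → ℝ) (hs : s ∈ F) (hs' : s' ∈ F)
    (hmin : ∀ t ∈ F, ∑ n, chat n (s n) ≤ ∑ n, chat n (t n))
    (hmin' : ∀ t ∈ F, ∑ n, chat n (s' n) ≤ ∑ n, chat n (t n)) :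
    s = s' := by
  have hsc := fun n => chat_strictConvex K hK (c n) (hconv n) (hmono n) (hdiff n) (chat n) (hchat n)
  by_contra hne
  obtain ⟨m, hm⟩ := Function.ne_iff.mp hne
  have hF := hFconv hs hs' (by norm_num : (0:ℝ) ≤ 1/2) (by norm_num : (0:ℝ) ≤ 1/2) (by norm_num)
  have h1 := hmin _ hF
  have h2 := hmin' _ hF
  have h3 : ∑ n, chat n (((1/2:ℝ) • s + (1/2:ℝ) • s') n)
      < ∑ n, ((1/2) * chat n (s n) + (1/2) * chat n (s' n)) := by
    apply Finset.sum_lt_sum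
    · intro n _
      exact (hsc n).convexOn.2 (hFpos s hs n) (hFpos s' hs' n) (by norm_num) (by norm_num)
        (by norm_num)
    · exact ⟨m, Finset.mem_univ _, (hsc m).2 (hFpos s hs m) (hFpos s' hs' m) hm
        (by norm_num) (by norm_num) (by norm_num)⟩
  rw [Finset.sum_add_distrib, ← Finset.mul_sum, ← Finset.mul_sum] at h3
  linarith
end

section
/- Let N ≥ 1, K > 0, and for each n = 1,…,N let c_n : ℝ → ℝ be convex, strictly increasing and differentiable on [0, ∞) with c_n(0) ≥ 0, and let ĉ_n(s) = (1 + s/K)·c_n(s) − (1/K)·∫₀^s c_n(x) dx. Let F ⊆ [0, ∞)^N, let s* ∈ F, and let s** ∈ F minimize ∑_{n=1}^N ĉ_n(s_n) over F. Then ∑_{n=1}^N c_n(s**_n) ≤ (1 + (max_{n} s*_n)/K) · ∑_{n=1}^N c_n(s*_n). -/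
/-- Core step in the price-of-anarchy bound: if `s**` minimizes the total modified cost over
`F ⊆ [0, ∞)^N` and `s* ∈ F`, then
`∑ n, c n (s** n) ≤ (1 + (max_n s* n)/K) · ∑ n, c n (s* n)`. -/
theorem poa_core_bound
    (N : ℕ) (hN : 1 ≤ N) (K : ℝ) (hK : 0 < K)
    (c : Fin N → ℝ → ℝ)
    (hconv : ∀ n, ConvexOn ℝ (Set.Ici (0 : ℝ)) (c n))
    (hmono : ∀ n, StrictMonoOn (c n) (Set.Ici (0 : ℝ)))
    (hdiff : ∀ n, DifferentiableOn ℝ (c n) (Set.Ici (0 : ℝ)))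
    (hc0 : ∀ n, 0 ≤ c n 0)
    (chat : Fin N → ℝ → ℝ)
    (hchat : ∀ n s, chat n s = (1 + s / K) * c n s - (1 / K) * ∫ x in (0:ℝ)..s, c n x)
    (F : Set (Fin N → ℝ))
    (hFpos : ∀ s ∈ F, ∀ n, 0 ≤ s n)
    (sStar sStarStar : Fin N → ℝ)
    (hsStar : sStar ∈ F) (hsStarStar : sStarStar ∈ F)
    (hmin : ∀ t ∈ F, ∑ n, chat n (sStarStar n) ≤ ∑ n, chat n (t n)) :
    ∑ n, c n (sStarStar n) ≤
      (1 + (Finset.univ.sup' (Finset.univ_nonempty_iff.mpr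
        (Fin.pos_iff_nonempty.mp hN)) sStar) / K) * ∑ n, c n (sStar n) := by
  have hnn : ∀ n x, 0 ≤ x → 0 ≤ c n x := fun n x hx =>
    (hc0 n).trans ((hmono n).monotoneOn (Set.mem_Ici.2 le_rfl) (Set.mem_Ici.2 hx) hx)
  have h1 : ∀ n x, 0 ≤ x → c n x ≤ chat n x := by
    intro n x hx
    have hint : IntervalIntegrable (c n) MeasureTheory.volume 0 x := by
      apply ContinuousOn.intervalIntegrable
      rw [Set.uIcc_of_le hx]
      exact (hdiff n).continuousOn.mono Set.Icc_subset_Ici_self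
    have h : ∫ y in (0:ℝ)..x, c n y ≤ ∫ y in (0:ℝ)..x, c n x := by
      apply intervalIntegral.integral_mono_on hx hint intervalIntegrable_const
      intro y hy
      exact (hmono n).monotoneOn (Set.mem_Ici.2 hy.1) (Set.mem_Ici.2 hx) hy.2
    rw [intervalIntegral.integral_const, smul_eq_mul, sub_zero] at h
    have h' := mul_le_mul_of_nonneg_left h (one_div_pos.2 hK).le
    rw [hchat]
    have e : (1 + x / K) * c n x = c n x + 1 / K * (x * c n x) := by ring
    linarith
  have h2 : ∀ n x, 0 ≤ x → chat n x ≤ (1 + x / K) * c n x := by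
    intro n x hx
    have h : 0 ≤ ∫ y in (0:ℝ)..x, c n y :=
      intervalIntegral.integral_nonneg hx (fun y hy => hnn n y hy.1)
    rw [hchat]
    have := mul_nonneg (one_div_pos.2 hK).le h
    linarith
  calc ∑ n, c n (sStarStar n) ≤ ∑ n, chat n (sStarStar n) :=
        Finset.sum_le_sum fun n _ => h1 n _ (hFpos _ hsStarStar n)
    _ ≤ ∑ n, chat n (sStar n) := hmin _ hsStar
    _ ≤ _ := by
        rw [Finset.mul_sum]
        refine Finset.sum_le_sum fun n _ => (h2 n _ (hFpos _ hsStar n)).trans ?_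
        refine mul_le_mul_of_nonneg_right ?_ (hnn n _ (hFpos _ hsStar n))
        have := Finset.le_sup' sStar (Finset.mem_univ n)
        gcongr
end

section
/- Let N ≥ 1, K > 0, and for each n = 1,…,N let c_n : ℝ → ℝ be convex, strictly increasing and differentiable on [0, ∞) with c_n(0) ≥ 0, and let ĉ_n(s) = (1 + s/K)·c_n(s) − (1/K)·∫₀^s c_n(x) dx. Let F ⊆ [0, ∞)^N and suppose M_1,…,M_N are real numbers such that every s ∈ F satisfies s_n ≤ M_n for all n. Let s* ∈ F minimize ∑_{n=1}^N c_n(s_n) over F and let s** ∈ F minimize ∑_{n=1}^N ĉ_n(s_n) over F. Then ∑_{n=1}^N c_n(s**_n) ≤ (1 + (max_n M_n)/K) · ∑_{n=1}^N c_n(s*_n). -/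
/-- Abstract form of the price-of-anarchy upper bound (Theorem 1): if `M n` bounds the `n`-th
component of every feasible supply profile, `s*` minimizes the true total cost over `F` and
`s**` minimizes the total modified cost over `F`, then
`∑ n, c n (s** n) ≤ (1 + (max_n M n)/K) · ∑ n, c n (s* n)`. -/
theorem poa_upper_bound_abstract
    (N : ℕ) (hN : 1 ≤ N) (K : ℝ) (hK : 0 < K)
    (c : Fin N → ℝ → ℝ)
    (hconv : ∀ n, ConvexOn ℝ (Set.Ici (0 : ℝ)) (c n))
    (hmono : ∀ n, StrictMonoOn (c n) (Set.Ici (0 : ℝ)))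
    (hdiff : ∀ n, DifferentiableOn ℝ (c n) (Set.Ici (0 : ℝ)))
    (hc0 : ∀ n, 0 ≤ c n 0)
    (chat : Fin N → ℝ → ℝ)
    (hchat : ∀ n s, chat n s = (1 + s / K) * c n s - (1 / K) * ∫ x in (0:ℝ)..s, c n x)
    (F : Set (Fin N → ℝ))
    (hFpos : ∀ s ∈ F, ∀ n, 0 ≤ s n)
    (M : Fin N → ℝ)
    (hM : ∀ s ∈ F, ∀ n, s n ≤ M n)
    (sStar sStarStar : Fin N → ℝ)
    (hsStar : sStar ∈ F) (hsStarStar : sStarStar ∈ F)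
    (hminStar : ∀ t ∈ F, ∑ n, c n (sStar n) ≤ ∑ n, c n (t n))
    (hminStarStar : ∀ t ∈ F, ∑ n, chat n (sStarStar n) ≤ ∑ n, chat n (t n)) :
    ∑ n, c n (sStarStar n) ≤
      (1 + (Finset.univ.sup' (Finset.univ_nonempty_iff.mpr
        (Fin.pos_iff_nonempty.mp hN)) M) / K) * ∑ n, c n (sStar n) := by
  have hii : ∀ n s, 0 ≤ s → IntervalIntegrable (c n) MeasureTheory.volume 0 s := by
    intro n s hs
    apply ContinuousOn.intervalIntegrable
    rw [Set.uIcc_of_le hs]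
    exact (hdiff n).continuousOn.mono Set.Icc_subset_Ici_self
  have hpos : ∀ n x, 0 ≤ x → 0 ≤ c n x := fun n x hx =>
    (hc0 n).trans ((hmono n).monotoneOn (Set.mem_Ici.mpr le_rfl) (Set.mem_Ici.mpr hx) hx)
  have hlow : ∀ n s, 0 ≤ s → c n s ≤ chat n s := by
    intro n s hs
    have h1 : ∫ x in (0:ℝ)..s, c n x ≤ ∫ _x in (0:ℝ)..s, c n s := by
      apply intervalIntegral.integral_mono_on hs (hii n s hs) intervalIntegrable_const
      intro x hx
      exact (hmono n).monotoneOn (Set.mem_Ici.mpr hx.1) (Set.mem_Ici.mpr hs) hx.2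
    rw [intervalIntegral.integral_const, smul_eq_mul, sub_zero] at h1
    have h2 := mul_le_mul_of_nonneg_left h1 (one_div_pos.mpr hK).le
    have h3 : (1 + s / K) * c n s = c n s + 1 / K * (s * c n s) := by ring
    rw [hchat, h3]
    linarith
  have hup : ∀ n s, 0 ≤ s → chat n s ≤ (1 + s / K) * c n s := by
    intro n s hs
    have h1 : 0 ≤ ∫ x in (0:ℝ)..s, c n x :=
      intervalIntegral.integral_nonneg hs (fun x hx => hpos n x hx.1)
    have h2 := mul_nonneg (one_div_pos.mpr hK).le h1
    rw [hchat]
    linarith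
  calc ∑ n, c n (sStarStar n) ≤ ∑ n, chat n (sStarStar n) :=
        Finset.sum_le_sum fun n _ => hlow n _ (hFpos _ hsStarStar n)
    _ ≤ ∑ n, chat n (sStar n) := hminStarStar _ hsStar
    _ ≤ _ := by
      rw [Finset.mul_sum]
      apply Finset.sum_le_sum
      intro n _
      refine (hup n _ (hFpos _ hsStar n)).trans ?_
      apply mul_le_mul_of_nonneg_right _ (hpos n _ (hFpos _ hsStar n))
      have h := (hM _ hsStar n).trans (Finset.le_sup' M (Finset.mem_univ n))
      have h2 := div_le_div_of_nonneg_right h hK.le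
      linarith
end

section
/- Let D > 0, W > 0, let N ≥ 3 be an integer, and let c : ℝ → ℝ be convex and strictly increasing. Define S(w) = D − w·(N−1)·D/(w + W) and u(w) = (w + W)/(N−1) − w − c(S(w)). Then u is strictly concave on [0, ∞). -/
/-- Strict concavity of a supplier's profit in its own bid: with `N ≥ 3` suppliers, total
demand `D > 0`, opposing total bid `W > 0`, and a convex strictly increasing cost `c`, the
profit `u(w) = (w + W)/(N−1) − w − c(S(w))` with dispatch `S(w) = D − w·(N−1)·D/(w + W)` is
strictly concave on `[0, ∞)`. -/
theorem profit_strictConcaveOn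
    (D W : ℝ) (hD : 0 < D) (hW : 0 < W) (N : ℕ) (hN : 3 ≤ N)
    (c : ℝ → ℝ) (hconv : ConvexOn ℝ Set.univ c) (hmono : StrictMono c) :
    StrictConcaveOn ℝ (Set.Ici (0 : ℝ))
      (fun w => (w + W) / ((N : ℝ) - 1) - w
        - c (D - w * ((N : ℝ) - 1) * D / (w + W))) := by
  have hk : (0 : ℝ) < (N : ℝ) - 1 := by
    have : (3 : ℝ) ≤ N := by exact_mod_cast hN
    linarith
  generalize (N : ℝ) - 1 = k at hk
  have hS : ∀ w : ℝ, 0 ≤ w → D - w * k * D / (w + W) = D - k * D + k * D * W * (1 / (w + W)) := by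
    intro w hw
    have : w + W ≠ 0 := by positivity
    field_simp
    ring
  refine ⟨convex_Ici 0, ?_⟩
  intro x hx y hy hxy a b ha hb hab
  have hx0 : 0 ≤ x := hx
  have hy0 : 0 ≤ y := hy
  simp only [smul_eq_mul]
  have hz : 0 ≤ a * x + b * y := by positivity
  have hX : 0 < x + W := by positivity
  have hY : 0 < y + W := by positivity
  have hZ : 0 < a * x + b * y + W := by positivity
  have key : 1 / (a * x + b * y + W) < a * (1 / (x + W)) + b * (1 / (y + W)) := by
    have e : a * (1 / (x + W)) + b * (1 / (y + W)) - 1 / (a * x + b * y + W)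
        = a * b * (x - y) ^ 2 / ((x + W) * (y + W) * (a * x + b * y + W)) := by
      obtain rfl : b = 1 - a := by linarith
      field_simp
      ring
    have h2 : 0 < (x - y) ^ 2 := by
      have := sub_ne_zero.mpr hxy
      positivity
    have : 0 < a * b * (x - y) ^ 2 / ((x + W) * (y + W) * (a * x + b * y + W)) := by positivity
    linarith
  have hlt : D - (a * x + b * y) * k * D / (a * x + b * y + W)
      < a * (D - x * k * D / (x + W)) + b * (D - y * k * D / (y + W)) := by
    rw [hS _ hz, hS _ hx0, hS _ hy0]
    have h3 := mul_lt_mul_of_pos_left key (show 0 < k * D * W by positivity)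
    obtain rfl : b = 1 - a := by linarith
    linarith
  have h4 := hmono hlt
  have h5 := hconv.2 (Set.mem_univ (D - x * k * D / (x + W)))
    (Set.mem_univ (D - y * k * D / (y + W))) ha.le hb.le hab
  simp only [smul_eq_mul] at h5
  have h6 : (a * x + b * y + W) / k = a * ((x + W) / k) + b * ((y + W) / k) := by
    obtain rfl : b = 1 - a := by linarith
    ring
  rw [h6]
  linarith
end

section
/- Let E be a nonempty finite set (the edges of a cycle), and for each e ∈ E let f_e ≥ 0, B_e > 0 and p_e ∈ ℝ. Suppose |p_e| ≤ f_e for every e ∈ E and ∑_{e ∈ E} p_e / B_e = 0. Then for every e₀ ∈ E, |p_{e₀}| ≤ min{ f_{e₀}, B_{e₀} · ∑_{e ∈ E, e ≠ e₀} f_e / B_e }. -/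
/-- Effective flow limit lemma: if on the edges of a cycle the flows satisfy the flow-limit
constraints `|p e| ≤ f e` and the voltage-angle constraint `∑ e, p e / B e = 0` (with
admittances `B e > 0`), then for every edge `e₀` of the cycle,
`|p e₀| ≤ min (f e₀) (B e₀ · ∑_{e ≠ e₀} f e / B e)`. -/
theorem effective_flow_limit
    {ι : Type*} [DecidableEq ι] (E : Finset ι) (hE : E.Nonempty)
    (f B p : ι → ℝ)
    (hf : ∀ e ∈ E, 0 ≤ f e) (hB : ∀ e ∈ E, 0 < B e)
    (hp : ∀ e ∈ E, |p e| ≤ f e)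
    (hcycle : ∑ e ∈ E, p e / B e = 0) :
    ∀ e₀ ∈ E, |p e₀| ≤ min (f e₀) (B e₀ * ∑ e ∈ E.erase e₀, f e / B e) := by
  intro e₀ he
  refine le_min (hp e₀ he) ?_
  have hb := hB e₀ he
  have hs := Finset.add_sum_erase E (fun e => p e / B e) he
  simp only [hcycle] at hs
  have h1 : |p e₀ / B e₀| ≤ ∑ e ∈ E.erase e₀, f e / B e := by
    have h2 : p e₀ / B e₀ = -∑ e ∈ E.erase e₀, p e / B e := by linarith
    rw [h2, abs_neg]
    refine (Finset.abs_sum_le_sum_abs _ _).trans (Finset.sum_le_sum fun e h => ?_)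
    have hm := Finset.mem_of_mem_erase h
    rw [abs_div, abs_of_pos (hB e hm)]
    exact div_le_div_of_nonneg_right (hp e hm) (hB e hm).le
  rw [abs_div, abs_of_pos hb, div_le_iff₀ hb] at h1
  linarith
end

section
/- Let E be a finite set with at least two elements, and for each e ∈ E let f_e ≥ 0, B_e > 0 and p_e ∈ ℝ. Suppose |p_e| ≤ f_e for every e ∈ E and ∑_{e ∈ E} p_e / B_e = 0. For each e ∈ E define the effective flow limit f̂_e = min{ f_e, B_e · ∑_{e′ ∈ E, e′ ≠ e} f_{e′} / B_{e′} }. Then for any two distinct e₁, e₂ ∈ E, p_{e₁} + p_{e₂} ≤ f̂_{e₁} + f̂_{e₂}. -/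
/-- Bound on the combined flow on two lines of a cycle by their effective flow limits: if
`|p e| ≤ f e` on every edge of the cycle and `∑ e, p e / B e = 0` with admittances `B e > 0`,
and `f̂ e = min (f e) (B e · ∑_{e' ≠ e} f e' / B e')` denotes the effective flow limit, then
for any two distinct edges `e₁, e₂` of the cycle, `p e₁ + p e₂ ≤ f̂ e₁ + f̂ e₂`. -/
theorem two_line_effective_flow_limit
    {ι : Type*} [DecidableEq ι] (E : Finset ι) (hE : 2 ≤ E.card)
    (f B p : ι → ℝ)
    (hf : ∀ e ∈ E, 0 ≤ f e) (hB : ∀ e ∈ E, 0 < B e)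
    (hp : ∀ e ∈ E, |p e| ≤ f e)
    (hcycle : ∑ e ∈ E, p e / B e = 0)
    (fhat : ι → ℝ)
    (hfhat : ∀ e ∈ E, fhat e = min (f e) (B e * ∑ e' ∈ E.erase e, f e' / B e')) :
    ∀ e₁ ∈ E, ∀ e₂ ∈ E, e₁ ≠ e₂ → p e₁ + p e₂ ≤ fhat e₁ + fhat e₂ := by
  have key : ∀ e ∈ E, p e ≤ fhat e := by
    intro e he
    rw [hfhat e he]
    refine le_min ((le_abs_self _).trans (hp e he)) ?_
    have hb := hB e he
    rw [← Finset.add_sum_erase E _ he] at hcycle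
    have h1 : ∑ e' ∈ E.erase e, -(p e' / B e') ≤ ∑ e' ∈ E.erase e, f e' / B e' := by
      refine Finset.sum_le_sum fun x hx => ?_
      have hx' := Finset.mem_of_mem_erase hx
      rw [← neg_div]
      exact div_le_div_of_nonneg_right ((neg_le_abs _).trans (hp x hx')) (hB x hx').le
    rw [Finset.sum_neg_distrib] at h1
    have h2 : p e / B e ≤ ∑ e' ∈ E.erase e, f e' / B e' := by linarith
    rw [div_le_iff₀ hb] at h2
    linarith
  intro e₁ h₁ e₂ h₂ _
  exact add_le_add (key e₁ h₁) (key e₂ h₂)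
end

section
/- Let N ≥ 3 and L ≥ 1 be integers, E ≥ 1, D > 0, and let A_g ∈ ℝ^{E×N}, A_ℓ ∈ ℝ^{E×L}, d ∈ ℝ^L, f ∈ ℝ^E, and s̲, s̄ ∈ ℝ^N with 0 ≤ s̲_n ≤ s̄_n for all n. Define the feasible set F = { s ∈ ℝ^N : ∑_{n=1}^N s_n = D, s̲_n ≤ s_n ≤ s̄_n for all n, and −f ≤ A_g·s + A_ℓ·d ≤ f componentwise }. For each n let c_n : ℝ → ℝ be convex, strictly increasing and differentiable on [0, ∞) with c_n(0) ≥ 0, and let ĉ_n(s) = (1 + s/((N−2)·D))·c_n(s) − (1/((N−2)·D))·∫₀^s c_n(x) dx. If s* ∈ F minimizes ∑_n c_n(s_n) over F and s** ∈ F minimizes ∑_n ĉ_n(s_n) over F, then ∑_{n=1}^N c_n(s**_n) ≤ ( 1 + max_n min{ s̄_n, D − ∑_{m≠n} s̲_m } / ((N−2)·D) ) · ∑_{n=1}^N c_n(s*_n). -/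
/-- Price-of-anarchy upper bound (capacity-dependent part of Theorem 1) for the explicit
polyhedral feasible set of economic dispatch: with `N ≥ 3` generators, total demand `D > 0`,
capacity limits `0 ≤ s̲ ≤ s̄`, and line-flow constraints `−f ≤ A_g·s + A_ℓ·d ≤ f`, if `s*`
minimizes the true total cost and `s**` minimizes the total modified cost over the feasible
set, then `∑ c_n(s**_n) ≤ (1 + max_n min{s̄_n, D − ∑_{m≠n} s̲_m} / ((N−2)D)) · ∑ c_n(s*_n)`. -/
theorem poa_upper_bound_dispatch
    (N L E : ℕ) (hN : 3 ≤ N) (hL : 1 ≤ L) (hE : 1 ≤ E) (D : ℝ) (hD : 0 < D)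
    (Ag : Matrix (Fin E) (Fin N) ℝ) (Al : Matrix (Fin E) (Fin L) ℝ)
    (d : Fin L → ℝ) (f : Fin E → ℝ)
    (slo shi : Fin N → ℝ)
    (hcap : ∀ n, 0 ≤ slo n ∧ slo n ≤ shi n)
    (F : Set (Fin N → ℝ))
    (hF : F = {s : Fin N → ℝ |
      (∑ n, s n) = D ∧
      (∀ n, slo n ≤ s n ∧ s n ≤ shi n) ∧
      (∀ e, -(f e) ≤ (Ag.mulVec s + Al.mulVec d) e ∧ (Ag.mulVec s + Al.mulVec d) e ≤ f e)})
    (c : Fin N → ℝ → ℝ)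
    (hconv : ∀ n, ConvexOn ℝ (Set.Ici (0 : ℝ)) (c n))
    (hmono : ∀ n, StrictMonoOn (c n) (Set.Ici (0 : ℝ)))
    (hdiff : ∀ n, DifferentiableOn ℝ (c n) (Set.Ici (0 : ℝ)))
    (hc0 : ∀ n, 0 ≤ c n 0)
    (chat : Fin N → ℝ → ℝ)
    (hchat : ∀ n s, chat n s = (1 + s / (((N : ℝ) - 2) * D)) * c n s
      - (1 / (((N : ℝ) - 2) * D)) * ∫ x in (0:ℝ)..s, c n x)
    (sStar sStarStar : Fin N → ℝ)
    (hsStar : sStar ∈ F) (hsStarStar : sStarStar ∈ F)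
    (hminStar : ∀ t ∈ F, ∑ n, c n (sStar n) ≤ ∑ n, c n (t n))
    (hminStarStar : ∀ t ∈ F, ∑ n, chat n (sStarStar n) ≤ ∑ n, chat n (t n)) :
    ∑ n, c n (sStarStar n) ≤
      (1 + (Finset.univ.sup' (Finset.univ_nonempty_iff.mpr
          (Fin.pos_iff_nonempty.mp (by omega)))
          (fun n => min (shi n) (D - ∑ m ∈ Finset.univ.erase n, slo m)))
        / (((N : ℝ) - 2) * D)) * ∑ n, c n (sStar n) := by
  have hN' : (3:ℝ) ≤ (N:ℝ) := by exact_mod_cast hN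
  have hK : 0 < ((N:ℝ) - 2) * D := mul_pos (by linarith) hD
  set K := ((N:ℝ) - 2) * D with hKdef
  set M := (Finset.univ.sup' (Finset.univ_nonempty_iff.mpr
          (Fin.pos_iff_nonempty.mp (by omega)))
          (fun n => min (shi n) (D - ∑ m ∈ Finset.univ.erase n, slo m))) with hM
  have hnn : ∀ n x, 0 ≤ x → 0 ≤ c n x := fun n x hx =>
    (hc0 n).trans ((hmono n).monotoneOn (Set.mem_Ici.2 le_rfl) (Set.mem_Ici.2 hx) hx)
  have hint : ∀ n x, 0 ≤ x → IntervalIntegrable (c n) MeasureTheory.volume 0 x := by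
    intro n x hx
    apply MonotoneOn.intervalIntegrable
    apply (hmono n).monotoneOn.mono
    intro y hy
    rw [Set.uIcc_of_le hx] at hy
    exact hy.1
  have hlow : ∀ n x, 0 ≤ x → c n x ≤ chat n x := by
    intro n x hx
    have h1 : ∫ y in (0:ℝ)..x, c n y ≤ ∫ y in (0:ℝ)..x, c n x := by
      apply intervalIntegral.integral_mono_on hx (hint n x hx) (by simp)
      intro y hy
      exact (hmono n).monotoneOn (Set.mem_Ici.2 hy.1) (Set.mem_Ici.2 hx) hy.2
    rw [intervalIntegral.integral_const, smul_eq_mul, sub_zero] at h1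
    have h2 : chat n x = c n x + (x * c n x - ∫ y in (0:ℝ)..x, c n y) / K := by
      rw [hchat]; ring
    have h3 := div_nonneg (sub_nonneg.2 h1) hK.le
    linarith
  have hup : ∀ n x, 0 ≤ x → x ≤ M → chat n x ≤ (1 + M / K) * c n x := by
    intro n x hx hxM
    have h1 : 0 ≤ ∫ y in (0:ℝ)..x, c n y :=
      intervalIntegral.integral_nonneg hx (fun y hy => hnn n y hy.1)
    have h2 : 0 ≤ (1 / K) * ∫ y in (0:ℝ)..x, c n y := by positivity
    have h3 : (1 + x / K) * c n x ≤ (1 + M / K) * c n x := by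
      have := hnn n x hx
      gcongr
    rw [hchat]; linarith
  have hmem1 := hsStar
  have hmem2 := hsStarStar
  rw [hF] at hmem1 hmem2
  obtain ⟨hs, hb, -⟩ := hmem1
  obtain ⟨-, hb2, -⟩ := hmem2
  have hle : ∀ n, sStar n ≤ M := by
    intro n
    refine le_trans ?_ (Finset.le_sup' (fun n => min (shi n) (D - ∑ m ∈ Finset.univ.erase n, slo m)) (Finset.mem_univ n))
    refine le_min (hb n).2 ?_
    have h1 := Finset.add_sum_erase Finset.univ sStar (Finset.mem_univ n)
    have h2 : ∑ m ∈ Finset.univ.erase n, slo m ≤ ∑ m ∈ Finset.univ.erase n, sStar m :=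
      Finset.sum_le_sum fun m _ => (hb m).1
    linarith
  calc ∑ n, c n (sStarStar n) ≤ ∑ n, chat n (sStarStar n) :=
        Finset.sum_le_sum fun n _ => hlow n _ ((hcap n).1.trans (hb2 n).1)
    _ ≤ ∑ n, chat n (sStar n) := hminStarStar _ hsStar
    _ ≤ ∑ n, (1 + M / K) * c n (sStar n) :=
        Finset.sum_le_sum fun n _ => hup n _ ((hcap n).1.trans (hb n).1) (hle n)
    _ = _ := by rw [Finset.mul_sum]
end
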